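/- Let S_n(k), k ≤ n, be the inhomogeneous Gaussian walk with variances σ₁² (steps ≤ n/2) and σ₂² (steps > n/2), and fix x ∈ [a_n, a_n+1] where a_n = √((σ₁²+σ₂²) log 2) n − (√(σ₁²+σ₂²)/(4√(log 2))) log n. Define s_{k,n}(x) and f_{k,n} as before. Then there exists a sequence ε(k) → 0 such that for every 0 ≤ k ≤ n/2, P( S_n − S_n(k) ∈ [x − s_{k,n}(x) − f_{k,n}, x − s_{k,n}(x) + f_{k,n}] ) ≤ 2^{−n + (2σ₁²/(σ₁²+σ₂²)) k + ε(k) k}, where S_n − S_n(k) ~ N(0, (σ₁²+σ₂²)n/2 − kσ₁²). -/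

import Mathlib

open MeasureTheory ProbabilityTheory

/-!
With `A = σ₁² + σ₂²`, the increment is a centered Gaussian whose variance is a fraction `ρ` of
`A * n / 2`, and its window is centered at `ρ * x`. On the window `y ≥ c - f` with `c = ρ * a_n`,
so the tangent inequality `y ^ 2 ≥ c ^ 2 - 2 * c * f` bounds the density in terms of `c`. Since
`a_n ^ 2 / (A * n) ≥ n * log 2 - log n / 2`, the exponential factor is at most
`√n * 2 ^ (-(ρ * n)) * exp (O(f))`; the Gaussian normalization cancels `√n`, and the remaining
factors, of order `f * exp (O(f))`, are `2 ^ (o(k))` because `f = o(k)`.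
-/

theorem gaussianReal_real_Icc_le {μ : ℝ} {v : NNReal} (hv : v ≠ 0) {a b M : ℝ} (hab : a ≤ b)
    (hM : ∀ y ∈ Set.Icc a b, gaussianPDFReal μ v y ≤ M) :
    (gaussianReal μ v).real (Set.Icc a b) ≤ M * (b - a) := by
  have hM0 : 0 ≤ M := (gaussianPDFReal_nonneg μ v a).trans (hM a (Set.left_mem_Icc.2 hab))
  apply ENNReal.toReal_le_of_le_ofReal (mul_nonneg hM0 (sub_nonneg.2 hab))
  rw [gaussianReal_apply _ hv, ENNReal.ofReal_mul hM0, ← Real.volume_Icc, ← setLIntegral_const]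
  exact setLIntegral_mono measurable_const fun y hy => ENNReal.ofReal_le_ofReal (hM y hy)

theorem gaussianPDFReal_le_of_sub_le {μ c f y : ℝ} (v : NNReal) (hc : 0 ≤ c)
    (hy : c - f ≤ y - μ) :
    gaussianPDFReal μ v y
      ≤ (√(2 * Real.pi * v))⁻¹ * Real.exp (-(c ^ 2 - 2 * c * f) / (2 * v)) := by
  have tangent : c ^ 2 - 2 * c * f ≤ (y - μ) ^ 2 := by
    linarith [sq_nonneg (y - μ - c), mul_le_mul_of_nonneg_left hy hc]
  rw [gaussianPDFReal]
  gcongr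

theorem gaussianReal_real_Icc_sub_add_le {v : NNReal} (hv : v ≠ 0) {c z f : ℝ} (hc : 0 ≤ c)
    (hcz : c ≤ z) (hf : 0 ≤ f) :
    (gaussianReal 0 v).real (Set.Icc (z - f) (z + f))
      ≤ 2 * f * (√(2 * Real.pi * v))⁻¹ * Real.exp (-(c ^ 2 - 2 * c * f) / (2 * v)) := by
  refine (gaussianReal_real_Icc_le hv (by linarith) fun y hy =>
    gaussianPDFReal_le_of_sub_le (c := c) (f := f) v hc (by linarith [hy.1])).trans_eq ?_
  ring

/-- The level `a_n` of the theorem, with `A = σ₁² + σ₂²`: up to a constant factor, a centered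
Gaussian of variance `A * n / 2` exceeds it with probability `2 ^ (-n)`. -/
noncomputable def firstMomentLevel (A n : ℝ) : ℝ :=
  √(A * Real.log 2) * n - √A / (4 * √(Real.log 2)) * Real.log n

theorem firstMomentLevel_le (A : ℝ) {n : ℝ} (hn : 1 ≤ n) :
    firstMomentLevel A n ≤ √(A * Real.log 2) * n := by
  have hlog : 0 ≤ Real.log n := Real.log_nonneg hn
  exact sub_le_self _ (by positivity)

theorem firstMomentLevel_nonneg (A : ℝ) {n : ℝ} (hn : 0 < n) : 0 ≤ firstMomentLevel A n := by
  have hlog2 : 1 / 2 < Real.log 2 := by linarith [Real.log_two_gt_d9]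
  have hpos : 0 < √(Real.log 2) := Real.sqrt_pos.2 (by linarith)
  have hsq : √(Real.log 2) ^ 2 = Real.log 2 := Real.sq_sqrt (by linarith)
  have hlog : Real.log n ≤ 4 * √(Real.log 2) ^ 2 * n := by
    rw [hsq]
    nlinarith [Real.log_le_sub_one_of_pos hn]
  rw [firstMomentLevel, Real.sqrt_mul' A (by linarith), sub_nonneg, div_mul_eq_mul_div,
    div_le_iff₀ (mul_pos four_pos hpos)]
  linarith [mul_le_mul_of_nonneg_left hlog (Real.sqrt_nonneg A)]

theorem le_firstMomentLevel_sq {A : ℝ} (hA : 0 ≤ A) (n : ℝ) :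
    A * n * (n * Real.log 2 - Real.log n / 2) ≤ firstMomentLevel A n ^ 2 := by
  have hlog2 : 0 < Real.log 2 := Real.log_pos one_lt_two
  have hmain : (√(A * Real.log 2) * n) ^ 2 = A * Real.log 2 * n ^ 2 := by
    rw [mul_pow, Real.sq_sqrt (by positivity)]
  have hcross : √(A * Real.log 2) * n * (√A / (4 * √(Real.log 2)) * Real.log n)
      = A * n * Real.log n / 4 := by
    have hne : √(Real.log 2) ≠ 0 := (Real.sqrt_pos.2 hlog2).ne'
    rw [Real.sqrt_mul hA]
    field_simp
    rw [Real.sq_sqrt hA]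
    ring
  rw [firstMomentLevel, sub_sq, hmain, mul_assoc 2, hcross]
  linarith [sq_nonneg (√A / (4 * √(Real.log 2)) * Real.log n)]

section Window

variable {A n ρ f : ℝ}

theorem firstMomentLevel_exponent_le (hA : 0 < A) (hn : 1 ≤ n) (hρ : 0 < ρ) (hρ1 : ρ ≤ 1)
    (hf : 0 ≤ f) :
    -((ρ * firstMomentLevel A n) ^ 2 - 2 * (ρ * firstMomentLevel A n) * f)
        / (2 * (ρ * (A * n / 2)))
      ≤ Real.log 2 * -(ρ * n) + Real.log n / 2 + 2 * √(A * Real.log 2) / A * f := by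
  have hn0 : 0 < n := by linarith
  have hlog : 0 ≤ Real.log n := Real.log_nonneg hn
  have hsq : n * Real.log 2 - Real.log n / 2 ≤ firstMomentLevel A n ^ 2 / (A * n) := by
    rw [le_div_iff₀' (by positivity)]
    exact le_firstMomentLevel_sq hA.le n
  have hslope : firstMomentLevel A n / n ≤ √(A * Real.log 2) :=
    (div_le_iff₀ hn0).2 (firstMomentLevel_le A hn)
  calc _ = -(ρ * (firstMomentLevel A n ^ 2 / (A * n)))
        + 2 * (firstMomentLevel A n / n) / A * f := by field_simp; ring
    _ ≤ -(ρ * (n * Real.log 2 - Real.log n / 2)) + 2 * √(A * Real.log 2) / A * f := by gcongr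
    _ ≤ _ := by linarith [mul_le_mul_of_nonneg_right hρ1 hlog]

theorem gaussianReal_real_window_le (hA : 0 < A) (hn : 1 ≤ n) (hρ : 0 < ρ) (hρ1 : ρ ≤ 1)
    (hf : 0 ≤ f) {x : ℝ} (hx : firstMomentLevel A n ≤ x) :
    (gaussianReal 0 (ρ * (A * n / 2)).toNNReal).real (Set.Icc (ρ * x - f) (ρ * x + f))
      ≤ 2 * f / √(Real.pi * (ρ * A)) * Real.exp (2 * √(A * Real.log 2) / A * f)
        * 2 ^ (-(ρ * n)) := by
  have hn0 : 0 < n := by linarith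
  have hV : 0 < ρ * (A * n / 2) := by positivity
  have hc : 0 ≤ ρ * firstMomentLevel A n := mul_nonneg hρ.le (firstMomentLevel_nonneg A hn0)
  have hexp_log : Real.exp (Real.log n / 2) = √n := by
    rw [← Real.log_sqrt hn0.le, Real.exp_log (Real.sqrt_pos.2 hn0)]
  have hnormalization : √(2 * Real.pi * (ρ * (A * n / 2))) = √(Real.pi * (ρ * A)) * √n := by
    rw [← Real.sqrt_mul (by positivity)]
    congr 1
    ring
  have hdensity := gaussianReal_real_Icc_sub_add_le (Real.toNNReal_pos.2 hV).ne' hc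
    (mul_le_mul_of_nonneg_left hx hρ.le) hf
  rw [Real.coe_toNNReal _ hV.le, hnormalization] at hdensity
  calc _ ≤ _ := hdensity
    _ ≤ 2 * f * (√(Real.pi * (ρ * A)) * √n)⁻¹ * Real.exp (Real.log 2 * -(ρ * n)
          + Real.log n / 2 + 2 * √(A * Real.log 2) / A * f) := by
        gcongr
        exact firstMomentLevel_exponent_le hA hn hρ hρ1 hf
    _ = _ := by
        have hsqrt : √n ≠ 0 := (Real.sqrt_pos.2 hn0).ne'
        rw [Real.exp_add, Real.exp_add, hexp_log, ← Real.rpow_def_of_pos two_pos]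
        field_simp

end Window

theorem gaussianReal_real_increment_window_le (σ1 : ℝ) {σ2 m k f x : ℝ} (h2 : 0 < σ2)
    (hm : 1 ≤ 2 * m) (hk : 0 ≤ k) (hkm : k ≤ m) (hf : 0 ≤ f)
    (hx : firstMomentLevel (σ1 ^ 2 + σ2 ^ 2) (2 * m) ≤ x) :
    (gaussianReal 0 ((σ1 ^ 2 + σ2 ^ 2) * (2 * m) / 2 - k * σ1 ^ 2).toNNReal).real
        (Set.Icc (x - σ1 ^ 2 * k * x / ((σ1 ^ 2 + σ2 ^ 2) * m) - f)
          (x - σ1 ^ 2 * k * x / ((σ1 ^ 2 + σ2 ^ 2) * m) + f))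
      ≤ 2 / σ2 * f
        * Real.exp (2 * √((σ1 ^ 2 + σ2 ^ 2) * Real.log 2) / (σ1 ^ 2 + σ2 ^ 2) * f)
        * 2 ^ (-(2 * m) + 2 * σ1 ^ 2 / (σ1 ^ 2 + σ2 ^ 2) * k) := by
  set A := σ1 ^ 2 + σ2 ^ 2 with hA
  have hA0 : 0 < A := by positivity
  have hm0 : 0 < m := by linarith
  set ρ := 1 - σ1 ^ 2 * k / (A * m) with hρ
  have hρA : σ2 ^ 2 ≤ ρ * A := by
    have hkm1 : σ1 ^ 2 * (k / m) ≤ σ1 ^ 2 :=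
      mul_le_of_le_one_right (sq_nonneg σ1) ((div_le_one hm0).2 hkm)
    have hρA_eq : ρ * A = A - σ1 ^ 2 * (k / m) := by rw [hρ]; field_simp
    linarith [hA]
  have hρ0 : 0 < ρ := pos_of_mul_pos_left ((pow_pos h2 2).trans_le hρA) hA0.le
  have hρ1 : ρ ≤ 1 := sub_le_self 1 (by positivity)
  have hvar : A * (2 * m) / 2 - k * σ1 ^ 2 = ρ * (A * (2 * m) / 2) := by rw [hρ]; field_simp
  have hcenter : x - σ1 ^ 2 * k * x / (A * m) = ρ * x := by rw [hρ]; ring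
  have hrate : -(2 * m) + 2 * σ1 ^ 2 / A * k = -(ρ * (2 * m)) := by rw [hρ]; field_simp; ring
  have hprefactor : 2 * f / √(Real.pi * (ρ * A)) ≤ 2 / σ2 * f := by
    have hσ2 : σ2 ≤ √(Real.pi * (ρ * A)) :=
      Real.le_sqrt_of_sq_le (by nlinarith [Real.pi_gt_three, mul_pos hρ0 hA0])
    rw [div_mul_eq_mul_div]
    gcongr
  rw [hvar, hcenter, hrate]
  refine (gaussianReal_real_window_le hA0 hm hρ0 hρ1 hf hx).trans ?_
  gcongr

theorem mul_mul_exp_le_exp_add_mul (b c f : ℝ) :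
    b * f * Real.exp (c * f) ≤ Real.exp ((b + c) * f) := by
  rw [add_mul, Real.exp_add]
  gcongr
  linarith [Real.add_one_le_exp (b * f)]

theorem isLittleO_const_mul_rpow_id (c : ℝ) {p : ℝ} (hp : p < 1) :
    (fun k : ℝ => c * k ^ p) =o[Filter.atTop] id := by
  refine Asymptotics.IsLittleO.const_mul_left (Asymptotics.isLittleO_of_tendsto'
    ((Filter.eventually_ne_atTop 0).mono fun k hk h => absurd h hk) ?_) c
  have htendsto : Filter.Tendsto (fun k : ℝ => k ^ (p - 1)) Filter.atTop (nhds 0) := by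
    simpa only [neg_sub] using tendsto_rpow_neg_atTop (sub_pos.2 hp)
  exact htendsto.congr' ((Filter.eventually_ne_atTop 0).mono fun k hk =>
    Real.rpow_sub_one hk p)

theorem stmt16_general (σ1 : ℝ) {σ2 : ℝ} (h2 : 0 < σ2) {f : ℝ → ℝ} (hf : ∀ k, 0 ≤ k → 0 ≤ f k)
    (hf0 : f 0 = 0) (hfo : f =o[Filter.atTop] id) :
    ∃ ε : ℝ → ℝ, Filter.Tendsto ε Filter.atTop (nhds 0) ∧
      ∀ m x k : ℝ, 1 ≤ 2 * m → firstMomentLevel (σ1 ^ 2 + σ2 ^ 2) (2 * m) ≤ x → 0 ≤ k → k ≤ m →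
        (gaussianReal 0 ((σ1 ^ 2 + σ2 ^ 2) * (2 * m) / 2 - k * σ1 ^ 2).toNNReal).real
          (Set.Icc (x - σ1 ^ 2 * k * x / ((σ1 ^ 2 + σ2 ^ 2) * m) - f k)
            (x - σ1 ^ 2 * k * x / ((σ1 ^ 2 + σ2 ^ 2) * m) + f k))
        ≤ 2 ^ (-(2 * m) + 2 * σ1 ^ 2 / (σ1 ^ 2 + σ2 ^ 2) * k + ε k * k) := by
  set A := σ1 ^ 2 + σ2 ^ 2
  set C := 2 / σ2 + 2 * √(A * Real.log 2) / A
  refine ⟨fun k => C / Real.log 2 * (f k / k), ?_, fun m x k hm hx hk hkm => ?_⟩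
  · simpa using hfo.tendsto_div_nhds_zero.const_mul (C / Real.log 2)
  have hlog2 : Real.log 2 ≠ 0 := (Real.log_pos one_lt_two).ne'
  have herror : Real.exp (C * f k) = 2 ^ (C / Real.log 2 * (f k / k) * k) := by
    have hcancel : f k / k * k = f k := div_mul_cancel_of_imp fun h => h ▸ hf0
    rw [Real.rpow_def_of_pos two_pos, mul_assoc, hcancel]
    field_simp
  refine (gaussianReal_real_increment_window_le σ1 h2 hm hk hkm (hf k hk) hx).trans ?_
  rw [Real.rpow_add two_pos _ (C / Real.log 2 * (f k / k) * k), ← herror, mul_comm]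
  gcongr
  exact mul_mul_exp_le_exp_add_mul _ _ _

/-- decay of the probability that the increment S_n - S_n(k) lands
in the admissible window, increasing variances case; S_n - S_n(k) is a centered
Gaussian with variance (σ₁²+σ₂²)n/2 - kσ₁² (n = 2m, k ≤ m). -/
theorem stmt16 (σ1 σ2 : ℝ) (h1 : 0 < σ1) (h12 : σ1 < σ2)
    (cf : ℝ) (hcf : 0 < cf) :
    ∃ ε : ℕ → ℝ, Filter.Tendsto ε Filter.atTop (nhds 0) ∧
      ∀ m : ℕ, 1 ≤ m → ∀ x : ℝ,
        (Real.sqrt ((σ1^2 + σ2^2) * Real.log 2) * (2*m)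
          - (Real.sqrt (σ1^2 + σ2^2)/(4*Real.sqrt (Real.log 2))) * Real.log (2*m)) ≤ x →
        x ≤ (Real.sqrt ((σ1^2 + σ2^2) * Real.log 2) * (2*m)
          - (Real.sqrt (σ1^2 + σ2^2)/(4*Real.sqrt (Real.log 2))) * Real.log (2*m)) + 1 →
        ∀ k : ℕ, k ≤ m →
        ((gaussianReal 0 (Real.toNNReal ((σ1^2 + σ2^2)*(2*m)/2 - k*σ1^2)))
          (Set.Icc
            (x - σ1^2*k*x/((σ1^2 + σ2^2)*m) - cf * (k:ℝ)^((2:ℝ)/3))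
            (x - σ1^2*k*x/((σ1^2 + σ2^2)*m) + cf * (k:ℝ)^((2:ℝ)/3)))).toReal
        ≤ (2:ℝ)^(-(2*(m:ℝ)) + (2*σ1^2/(σ1^2 + σ2^2))*k + ε k * k) := by
  obtain ⟨ε, hε, hbound⟩ := stmt16_general σ1 (h1.trans h12) (f := fun k => cf * k ^ ((2 : ℝ) / 3))
    (fun k hk => by positivity) (by norm_num) (isLittleO_const_mul_rpow_id cf (by norm_num))
  exact ⟨fun k => ε k, hε.comp tendsto_natCast_atTop_atTop, fun m hm x hx _ k hkm =>
    hbound m x k (by norm_cast; lia) hx k.cast_nonneg (mod_cast hkm)⟩
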